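/- Let 𝒮 ⊂ ℝ³ be a smooth (C¹) compact closed embedded surface with exterior unit normal n, and let v₊, v₋ be C¹ vector fields, defined up to 𝒮 on the exterior and interior regions respectively, which are divergence-free and tangent to 𝒮. Then the integral over 𝒮 of ⟨D(v₊ + v₋)·n, n⟩ with respect to the surface measure equals 0. In particular, the stability inequality ⟨D(v₊ + v₋)·n, n⟩ < 0 cannot hold at every point of 𝒮. -/

import Mathlib

noncomputable section

open MeasureTheory Filter Set
open scoped RealInnerProductSpace Topology

abbrev E3 : Type := EuclideanSpace ℝ (Fin 3)
abbrev E2 : Type := EuclideanSpace ℝ (Fin 2)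

def mk3 (a b c : ℝ) : E3 := (EuclideanSpace.equiv (Fin 3) ℝ).symm ![a, b, c]

def e3 (i : Fin 3) : E3 := EuclideanSpace.single i 1

/-- `∂_j v_i` at `p`. -/
def pder (v : E3 → E3) (i j : Fin 3) (p : E3) : ℝ := fderiv ℝ v p (e3 j) i

def div3 (v : E3 → E3) (p : E3) : ℝ := ∑ i, pder v i i p

def curl3 (v : E3 → E3) (p : E3) : E3 :=
  mk3 (pder v 2 1 p - pder v 1 2 p) (pder v 0 2 p - pder v 2 0 p)
    (pder v 1 0 p - pder v 0 1 p)

def lap3 (f : E3 → ℝ) (p : E3) : ℝ :=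
  ∑ j, fderiv ℝ (fun x => fderiv ℝ f x (e3 j)) p (e3 j)

def IsTangentAt (S : Set E3) (p v : E3) : Prop :=
  ∃ γ : ℝ → E3, (∀ t, γ t ∈ S) ∧ γ 0 = p ∧ HasDerivAt γ v 0

def IsSurface (k : ℕ∞) (S : Set E3) : Prop :=
  ∀ p ∈ S, ∃ (f : E2 → E3) (U : Set E2) (V : Set E3),
    IsOpen U ∧ IsOpen V ∧ p ∈ V ∧ ContDiffOn ℝ k f U ∧ Set.InjOn f U ∧
    f '' U = S ∩ V ∧ ∀ x ∈ U, Function.Injective (fderiv ℝ f x)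

structure CVSBase (S Ωm Ωp : Set E3) (vm vp : E3 → E3) : Prop where
  openm : IsOpen Ωm
  openp : IsOpen Ωp
  disj : Disjoint Ωm Ωp
  disjm : Disjoint Ωm S
  disjp : Disjoint Ωp S
  clm : S ⊆ closure Ωm
  clp : S ⊆ closure Ωp
  smoothm : ∃ W, IsOpen W ∧ Ωm ∪ S ⊆ W ∧ ContDiffOn ℝ 1 vm W
  smoothp : ∃ W, IsOpen W ∧ Ωp ∪ S ⊆ W ∧ ContDiffOn ℝ 1 vp W
  divm : ∀ p ∈ Ωm, div3 vm p = 0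
  divp : ∀ p ∈ Ωp, div3 vp p = 0
  curlm : ∀ p ∈ Ωm, curl3 vm p = 0
  curlp : ∀ p ∈ Ωp, curl3 vp p = 0
  tangentm : ∀ p ∈ S, IsTangentAt S p (vm p)
  tangentp : ∀ p ∈ S, IsTangentAt S p (vp p)

structure CVSPair (S Ωm Ωp : Set E3) (vm vp : E3 → E3)
    extends CVSBase S Ωm Ωp vm vp : Prop where
  strain : ∀ p ∈ S, (fderiv ℝ vp p + fderiv ℝ vm p) (vp p - vm p) = 0
  bernoulli : ∀ p ∈ S, ∀ᶠ q in 𝓝[S] p,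
    ‖vp q‖ ^ 2 - ‖vm q‖ ^ 2 = ‖vp p‖ ^ 2 - ‖vm p‖ ^ 2

/-- the open region `Ωm` is the bounded region enclosed by the closed surface `S`,
and `Ωp` is its exterior. -/
structure EnclosedBy (S Ωm Ωp : Set E3) : Prop where
  openm : IsOpen Ωm
  bounded : Bornology.IsBounded Ωm
  fr : frontier Ωm = S
  plus : Ωp = (Ωm ∪ S)ᶜ

structure IsFrame (n0 : E3) (π : E3 →L[ℝ] E2) (ι : E2 →L[ℝ] E3) : Prop where
  decomp : ∀ x, x = ι (π x) + ⟪n0, x⟫ • n0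
  pi_iota : ∀ w, π (ι w) = w
  pi_n : π n0 = 0
  n_iota : ∀ w, ⟪n0, ι w⟫ = 0
  norm_iota : ∀ w, ‖ι w‖ = ‖w‖
  norm_sq : ∀ x, ‖x‖ ^ 2 = ‖π x‖ ^ 2 + ⟪n0, x⟫ ^ 2
  det_eq : ∀ (A : E3 →L[ℝ] E3) (t : ℝ),
    |LinearMap.det ((ContinuousLinearMap.id ℝ E2 + t • (π ∘L A ∘L ι) : E2 →L[ℝ] E2) : E2 →ₗ[ℝ] E2)
      - (1 + t * ((∑ i, A (e3 i) i) - ⟪A n0, n0⟫))| ≤ 2 * t ^ 2 * ‖A‖ ^ 2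

lemma exists_frame (n0 : E3) (h : ‖n0‖ = 1) : ∃ π ι, IsFrame n0 π ι := by
  obtain ⟨b, hb⟩ : ∃ b : OrthonormalBasis (Fin 3) ℝ E3, b 2 = n0 := by
    have hon : Orthonormal ℝ (({2} : Set (Fin 3)).domRestrict (fun _ : Fin 3 => n0)) := by
      refine ⟨fun _ => h, fun i j hij => (hij ?_).elim⟩
      exact Subsingleton.elim _ _
    obtain ⟨b, hb⟩ := hon.exists_orthonormalBasis_extension_of_card_eq (by simp)
    exact ⟨b, hb 2 (by simp)⟩
  let π : E3 →L[ℝ] E2 := LinearMap.toContinuousLinearMap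
    { toFun := fun x => !₂[⟪b 0, x⟫, ⟪b 1, x⟫]
      map_add' := by intro x y; ext i; fin_cases i <;> simp [inner_add_right]
      map_smul' := by intro c x; ext i; fin_cases i <;> simp [inner_smul_right] }
  let ι : E2 →L[ℝ] E3 := LinearMap.toContinuousLinearMap
    { toFun := fun w => w 0 • b 0 + w 1 • b 1
      map_add' := by intro x y; simp only [PiLp.add_apply]; module
      map_smul' := by intro c x; simp only [PiLp.smul_apply, smul_eq_mul, RingHom.id_apply]; module }
  have hπ : ∀ x, π x = !₂[⟪b 0, x⟫, ⟪b 1, x⟫] := fun x => rfl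
  have hι : ∀ w, ι w = w 0 • b 0 + w 1 • b 1 := fun w => rfl
  have hbb : ∀ i j, ⟪b i, b j⟫ = if i = j then (1:ℝ) else 0 := fun i j => by
    simpa using orthonormal_iff_ite.1 b.orthonormal i j
  have hdec : ∀ x, x = ⟪b 0, x⟫ • b 0 + ⟪b 1, x⟫ • b 1 + ⟪b 2, x⟫ • b 2 := fun x => by
    conv_lhs => rw [← b.sum_repr' x]
    simp [Fin.sum_univ_three]
  have hsq : ∀ x, ‖x‖ ^ 2 = ⟪b 0, x⟫ ^ 2 + ⟪b 1, x⟫ ^ 2 + ⟪b 2, x⟫ ^ 2 := fun x => by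
    have := b.sum_sq_norm_inner_right x
    simp [Fin.sum_univ_three] at this
    exact this.symm
  have hb1 : ∀ i, ‖b i‖ = 1 := fun i => b.orthonormal.1 i
  subst hb
  refine ⟨π, ι, ⟨?_, ?_, ?_, ?_, ?_, ?_, ?_⟩⟩
  · intro x
    rw [hι, hπ]; simpa using hdec x
  · intro w
    rw [hι, hπ]; ext i; fin_cases i <;> simp [inner_add_right, inner_smul_right, hbb]
  · rw [hπ]; ext i; fin_cases i <;> simp [hbb]
  · intro w
    rw [hι]; simp [inner_add_right, inner_smul_right, hbb]
  · intro w
    have : ‖ι w‖ ^ 2 = ‖w‖ ^ 2 := by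
      rw [hsq, EuclideanSpace.norm_sq_eq, hι]
      simp [inner_add_right, inner_smul_right, hbb, Fin.sum_univ_two]
    exact (pow_left_inj₀ (norm_nonneg _) (norm_nonneg _) two_ne_zero).1 this
  · intro x
    rw [hsq, EuclideanSpace.norm_sq_eq, hπ]
    simp [Fin.sum_univ_two]
  · intro A t
    have htr : (∑ i, A (e3 i) i) = ⟪b 0, A (b 0)⟫ + ⟪b 1, A (b 1)⟫ + ⟪b 2, A (b 2)⟫ := by
      have h1 := LinearMap.trace_eq_sum_inner (A : E3 →ₗ[ℝ] E3) b
      have h2 := LinearMap.trace_eq_sum_inner (A : E3 →ₗ[ℝ] E3) (EuclideanSpace.basisFun (Fin 3) ℝ)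
      rw [h1] at h2
      simp [Fin.sum_univ_three, EuclideanSpace.inner_single_left] at h2
      simp only [Fin.sum_univ_three, e3]
      linarith
    have hdet : LinearMap.det ((ContinuousLinearMap.id ℝ E2 + t • (π ∘L A ∘L ι) : E2 →L[ℝ] E2) : E2 →ₗ[ℝ] E2)
        = (1 + t * ⟪b 0, A (b 0)⟫) * (1 + t * ⟪b 1, A (b 1)⟫)
          - (t * ⟪b 0, A (b 1)⟫) * (t * ⟪b 1, A (b 0)⟫) := by
      rw [← LinearMap.det_toMatrix (EuclideanSpace.basisFun (Fin 2) ℝ).toBasis, Matrix.det_fin_two]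
      simp [LinearMap.toMatrix_apply, hπ, hι]
    have hbd : ∀ i j, |⟪b i, A (b j)⟫| ≤ ‖A‖ := fun i j => by
      calc |⟪b i, A (b j)⟫| ≤ ‖b i‖ * ‖A (b j)‖ := abs_real_inner_le_norm _ _
        _ ≤ 1 * (‖A‖ * 1) := by
          rw [hb1]; gcongr; simpa [hb1] using A.le_opNorm (b j)
        _ = ‖A‖ := by ring
    rw [hdet, htr, real_inner_comm (b 2) (A (b 2))]
    have e : (1 + t * ⟪b 0, A (b 0)⟫) * (1 + t * ⟪b 1, A (b 1)⟫)
          - (t * ⟪b 0, A (b 1)⟫) * (t * ⟪b 1, A (b 0)⟫) - (1 + t * (⟪b 0, A (b 0)⟫ + ⟪b 1, A (b 1)⟫ + ⟪b 2, A (b 2)⟫ - ⟪b 2, A (b 2)⟫)) = t ^ 2 * (⟪b 0, A (b 0)⟫ * ⟪b 1, A (b 1)⟫ - ⟪b 0, A (b 1)⟫ * ⟪b 1, A (b 0)⟫) := by ring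
    rw [e, abs_mul, abs_of_nonneg (sq_nonneg t)]
    have h1 : |⟪b 0, A (b 0)⟫ * ⟪b 1, A (b 1)⟫| ≤ ‖A‖ * ‖A‖ := by
      rw [abs_mul]; exact mul_le_mul (hbd _ _) (hbd _ _) (abs_nonneg _) (norm_nonneg _)
    have h2 : |⟪b 0, A (b 1)⟫ * ⟪b 1, A (b 0)⟫| ≤ ‖A‖ * ‖A‖ := by
      rw [abs_mul]; exact mul_le_mul (hbd _ _) (hbd _ _) (abs_nonneg _) (norm_nonneg _)
    have h3 := abs_sub (⟪b 0, A (b 0)⟫ * ⟪b 1, A (b 1)⟫) (⟪b 0, A (b 1)⟫ * ⟪b 1, A (b 0)⟫)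
    nlinarith [sq_nonneg t]

lemma IsFrame.norm_pi_le {n0 π ι} (h : IsFrame n0 π ι) (x : E3) : ‖π x‖ ≤ ‖x‖ := by
  have := h.norm_sq x
  nlinarith [norm_nonneg x, norm_nonneg (π x), sq_nonneg ⟪n0, x⟫]

lemma IsFrame.le_norm_pi {n0 π ι} (h : IsFrame n0 π ι) (x : E3) {δ : ℝ}
    (hx : |⟪n0, x⟫| ≤ δ * ‖x‖) : (1 - δ) * ‖x‖ ≤ ‖π x‖ := by
  have h1 := h.norm_sq x
  have h2 : ‖x‖ ≤ ‖π x‖ + |⟪n0, x⟫| := by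
    rw [← sq_abs ⟪n0, x⟫] at h1
    by_contra! hc
    nlinarith [norm_nonneg x, norm_nonneg (π x), abs_nonneg ⟪n0, x⟫]
  linarith

lemma hausdorff_le_of_expand {X Y : Type*} [MetricSpace X] [MeasurableSpace X] [BorelSpace X]
    [MetricSpace Y] [MeasurableSpace Y] [BorelSpace Y] [Nonempty X] (a : Set X) (g : X → Y) (c : ℝ)
    (hc : 0 < c) (h : ∀ x ∈ a, ∀ y ∈ a, c * dist x y ≤ dist (g x) (g y)) :
    ENNReal.ofReal (c ^ 2) * μH[2] a ≤ μH[2] (g '' a) := by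
  have hinj : InjOn g a := by
    intro x hx y hy hxy
    have := h x hx y hy
    rw [hxy, dist_self] at this
    exact dist_le_zero.1 (by nlinarith [dist_nonneg (x := x) (y := y)])
  have hL : LipschitzOnWith (Real.toNNReal c⁻¹) (Function.invFunOn g a) (g '' a) := by
    refine LipschitzOnWith.of_dist_le_mul ?_
    rintro _ ⟨x, hx, rfl⟩ _ ⟨y, hy, rfl⟩
    rw [hinj.leftInvOn_invFunOn hx, hinj.leftInvOn_invFunOn hy, Real.coe_toNNReal _ (by positivity)]
    rw [inv_mul_eq_div, le_div_iff₀ hc, mul_comm]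
    exact h x hx y hy
  have h1 := hL.hausdorffMeasure_image_le (d := 2) (by norm_num)
  rw [hinj.leftInvOn_invFunOn.image_image] at h1
  calc ENNReal.ofReal (c ^ 2) * μH[2] a ≤ ENNReal.ofReal (c ^ 2) * (((Real.toNNReal c⁻¹ : NNReal) : ENNReal) ^ (2:ℝ) * μH[2] (g '' a)) := by gcongr
    _ = μH[2] (g '' a) := by
      rw [← mul_assoc]
      have : ENNReal.ofReal (c ^ 2) * ((Real.toNNReal c⁻¹ : NNReal) : ENNReal) ^ (2:ℝ) = 1 := by
        rw [ENNReal.rpow_two]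
        change ENNReal.ofReal (c ^ 2) * (ENNReal.ofReal c⁻¹) ^ 2 = 1
        rw [← ENNReal.ofReal_pow (by positivity), ← ENNReal.ofReal_mul (by positivity)]
        rw [← mul_pow, mul_inv_cancel₀ hc.ne']; simp
      rw [this, one_mul]

lemma IsFrame.hausdorff_pi_le {n0 π ι} (h : IsFrame n0 π ι) (a : Set E3) :
    μH[2] (π '' a) ≤ μH[2] a := by
  have hL : LipschitzWith 1 π := LipschitzWith.of_dist_le_mul fun x y => by
    simp only [dist_eq_norm, ← map_sub, NNReal.coe_one, one_mul]
    exact h.norm_pi_le _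
  simpa using hL.hausdorffMeasure_image_le (d := 2) (by norm_num) a

instance : Measure.IsAddHaarMeasure (μH[2] : Measure E2) := by
  have := isAddHaarMeasure_hausdorffMeasure (E := E2)
  simpa using this

lemma local_measure {n0 π ι} (hF : IsFrame n0 π ι) (hn0 : ‖n0‖ = 1) (A : E3 →L[ℝ] E3) (K t ε : ℝ) (hK : ‖A‖ ≤ K)
    (ht : 0 < t) (htK : t * K ≤ 1 / 8) (hε : 0 < ε) (htε : t * ε ≤ 1 / 10) (htK2 : t * K ^ 2 ≤ ε)
    (htr : ∑ i, A (e3 i) i = 0)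
    (a : Set E3) (φ : E3 → E3)
    (hφ : ∀ x ∈ a, ∀ y ∈ a, ‖φ x - φ y - (x - y) - t • A (x - y)‖ ≤ t * ε * ‖x - y‖)
    (hn : ∀ x ∈ a, ∀ y ∈ a, |⟪n0, x - y⟫| ≤ t * ε * ‖x - y‖) :
    ENNReal.ofReal (1 - t * ⟪A n0, n0⟫ - 30 * t * ε) * μH[2] a ≤ μH[2] (φ '' a) := by
  set M : E2 →L[ℝ] E2 := ContinuousLinearMap.id ℝ E2 + t • (π ∘L A ∘L ι) with hM
  have hK0 : 0 ≤ K := (norm_nonneg A).trans hK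
  have hBw : ∀ w, ‖π (A (ι w))‖ ≤ K * ‖w‖ := fun w => by
    calc ‖π (A (ι w))‖ ≤ ‖A (ι w)‖ := hF.norm_pi_le _
      _ ≤ ‖A‖ * ‖ι w‖ := A.le_opNorm _
      _ ≤ K * ‖w‖ := by rw [hF.norm_iota]; gcongr
  have hMw : ∀ w, ‖w‖ ≤ 2 * ‖M w‖ := fun w => by
    have h1 : w = M w - t • π (A (ι w)) := by simp [hM]
    have h2 : ‖w‖ ≤ ‖M w‖ + ‖t • π (A (ι w))‖ := by
      calc ‖w‖ = ‖M w - t • π (A (ι w))‖ := by rw [← h1]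
        _ ≤ _ := norm_sub_le _ _
    rw [norm_smul, Real.norm_of_nonneg ht.le] at h2
    nlinarith [hBw w, norm_nonneg w]
  have hinj : Function.Injective (M : E2 →ₗ[ℝ] E2) := by
    rw [← LinearMap.ker_eq_bot, LinearMap.ker_eq_bot']
    intro w hw
    have : M w = 0 := hw
    have h2 := hMw w
    rw [this] at h2; simpa using h2
  let e := LinearEquiv.ofInjectiveEndo (M : E2 →ₗ[ℝ] E2) hinj
  have he : ∀ w, e w = M w := fun w => rfl
  have hsymm : ∀ w, ‖e.symm w‖ ≤ 2 * ‖w‖ := fun w => by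
    have := hMw (e.symm w)
    rwa [← he, e.apply_symm_apply] at this
  let g : E3 → E2 := fun x => e.symm (π (φ x))
  have hexp : ∀ x ∈ a, ∀ y ∈ a, (1 - 5 * t * ε) * dist x y ≤ dist (g x) (g y) := by
    intro x hx y hy
    rw [dist_eq_norm, dist_eq_norm]
    set z := x - y with hz
    have h1 : π (φ x) - π (φ y) = M (π z) + (t • ⟪n0, z⟫ • π (A n0) + π (φ x - φ y - z - t • A z)) := by
      have h2 : A z = A (ι (π z)) + ⟪n0, z⟫ • A n0 := by
        conv_lhs => rw [hF.decomp z]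
        simp
      have h3 : π (A z) = π (A (ι (π z))) + ⟪n0, z⟫ • π (A n0) := by rw [h2]; simp
      simp only [hM, map_sub, map_smul, _root_.add_apply, ContinuousLinearMap.id_apply,
        _root_.smul_apply, ContinuousLinearMap.comp_apply, h3]
      module
    set r := (t • ⟪n0, z⟫ • π (A n0) + π (φ x - φ y - z - t • A z)) with hr
    have h2 : g x - g y = π z + e.symm r := by
      simp only [g]
      rw [← map_sub, h1, map_add, ← he, e.symm_apply_apply]
    have hAn : ‖π (A n0)‖ ≤ K := by
      refine (hF.norm_pi_le _).trans ((A.le_opNorm _).trans ?_)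
      rw [hn0, mul_one]; exact hK
    have h3 : ‖r‖ ≤ t * (t * ε * ‖z‖) * K + t * ε * ‖z‖ := by
      refine (norm_add_le _ _).trans (add_le_add ?_ ?_)
      · rw [norm_smul, norm_smul, Real.norm_of_nonneg ht.le, Real.norm_eq_abs, ← mul_assoc]
        have := hn x hx y hy
        gcongr
      · exact (hF.norm_pi_le _).trans (hφ x hx y hy)
    have h4 := hF.le_norm_pi z (hn x hx y hy)
    have h5 : ‖π z‖ - ‖e.symm r‖ ≤ ‖g x - g y‖ := by
      rw [h2]; simpa using norm_sub_norm_le (π z) (-(e.symm r))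
    have h6 := hsymm r
    have h7 : t * (t * ε * ‖z‖) * K ≤ t * ε * ‖z‖ * 1 := by
      have : t * (t * ε * ‖z‖) * K = (t * ε * ‖z‖) * (t * K) := by ring
      rw [this]; gcongr; linarith
    linarith
  have hc : 0 < 1 - 5 * t * ε := by linarith
  have h1 := hausdorff_le_of_expand a g _ hc hexp
  have h2 : μH[2] (π '' (φ '' a)) = ENNReal.ofReal |LinearMap.det (M : E2 →ₗ[ℝ] E2)| * μH[2] (g '' a) := by
    rw [← Measure.addHaar_image_linearMap, ← image_comp, ← image_comp]
    congr 1
    refine image_congr fun x _ => ?_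
    change _ = e (e.symm _)
    simp
  have hd := hF.det_eq A t
  rw [htr, ← hM] at hd
  set D := LinearMap.det (M : E2 →ₗ[ℝ] E2)
  have hAnn : |⟪A n0, n0⟫| ≤ K := by
    refine (abs_real_inner_le_norm _ _).trans ?_
    rw [hn0, mul_one]
    refine (A.le_opNorm _).trans ?_
    rw [hn0, mul_one]; exact hK
  have hA2 : 2 * t ^ 2 * ‖A‖ ^ 2 ≤ 2 * (t * ε) := by
    have : ‖A‖ ^ 2 ≤ K ^ 2 := by gcongr
    calc 2 * t ^ 2 * ‖A‖ ^ 2 ≤ 2 * t ^ 2 * K ^ 2 := by gcongr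
      _ = 2 * (t * (t * K ^ 2)) := by ring
      _ ≤ 2 * (t * ε) := by gcongr
  have hD1 := abs_le.1 hd
  have hu := abs_le.1 hAnn
  have htu : t * ⟪A n0, n0⟫ ≤ 1 / 8 := by nlinarith
  have htu' : - (1 / 8) ≤ t * ⟪A n0, n0⟫ := by nlinarith
  have hDpos : 0 < D := by nlinarith [hD1.1]
  rw [abs_of_pos hDpos] at h2
  calc ENNReal.ofReal (1 - t * ⟪A n0, n0⟫ - 30 * t * ε) * μH[2] a
      ≤ ENNReal.ofReal (D * (1 - 5 * t * ε) ^ 2) * μH[2] a := by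
        gcongr
        set u := t * ⟪A n0, n0⟫
        set q := t * ε
        have hq : 0 < q := mul_pos ht hε
        have e1 : 1 - 5 * t * ε = 1 - 5 * q := by ring
        have e2 : 30 * t * ε = 30 * q := by ring
        have e3' : t * (0 - ⟪A n0, n0⟫) = - u := by simp only [u]; ring
        rw [e1, e2]
        rw [e3'] at hD1
        have hDl : 1 - u - 2 * q ≤ D := by linarith [hD1.1]
        have : (1 - u - 2 * q) * (1 - 10 * q) ≤ D * (1 - 5 * q) ^ 2 := by
          apply mul_le_mul hDl _ (by linarith) hDpos.le
          nlinarith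
        nlinarith
    _ = ENNReal.ofReal D * (ENNReal.ofReal ((1 - 5 * t * ε) ^ 2) * μH[2] a) := by
        rw [ENNReal.ofReal_mul hDpos.le, mul_assoc]
    _ ≤ ENNReal.ofReal D * μH[2] (g '' a) := by gcongr
    _ = μH[2] (π '' (φ '' a)) := h2.symm
    _ ≤ μH[2] (φ '' a) := hF.hausdorff_pi_le _

structure Geo (S Ωm Ωp : Set E3) (n : E3 → E3) : Prop where
  hS : IsSurface 1 S
  hcpt : IsCompact S
  henc : EnclosedBy S Ωm Ωp
  hn_unit : ∀ p ∈ S, ‖n p‖ = 1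
  hn_orth : ∀ p ∈ S, ∀ v, IsTangentAt S p v → ⟪n p, v⟫ = 0
  hn_cont : ContinuousOn n S
  hn_out : ∀ p ∈ S, ∃ ε > (0:ℝ), ∀ t : ℝ, 0 < t → t < ε →
      p + t • n p ∈ Ωp ∧ p - t • n p ∈ Ωm

lemma tangent_of_chart {S : Set E3} {f : E2 → E3} {U : Set E2} (hU : IsOpen U) (hf : f '' U ⊆ S)
    {u : E2} (hu : u ∈ U) {f' : E2 →L[ℝ] E3} (hd : HasFDerivAt f f' u) (v : E2) :
    IsTangentAt S (f u) (f' v) := by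
  classical
  have hline : HasDerivAt (fun t : ℝ => u + t • v) v 0 := by
    simpa using ((hasDerivAt_id (0:ℝ)).smul_const v).const_add u
  have hcomp : HasDerivAt (fun t : ℝ => f (u + t • v)) (f' v) 0 := by
    have hd' : HasFDerivAt f f' (u + (0:ℝ) • v) := by simpa using hd
    exact hd'.comp_hasDerivAt (0:ℝ) hline
  have hev : ∀ᶠ t : ℝ in 𝓝 0, u + t • v ∈ U := by
    apply hline.continuousAt.eventually_mem
    simpa using hU.mem_nhds hu
  refine ⟨fun t => if u + t • v ∈ U then f (u + t • v) else f u, fun t => ?_, ?_, ?_⟩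
  · dsimp only
    split_ifs with h
    · exact hf ⟨_, h, rfl⟩
    · exact hf ⟨_, hu, rfl⟩
  · simp
  · refine hcomp.congr_of_eventuallyEq ?_
    filter_upwards [hev] with t ht
    simp [ht]

lemma local_step {S Ωm Ωp : Set E3} {n : E3 → E3} (G : Geo S Ωm Ωp n) {n0 π ι}
    (hF : IsFrame n0 π ι) {η : ℝ} (hη : 0 < η) (hη2 : η ≤ 1 / 6) {q : E3} (hq : q ∈ S)
    (hnq : ‖n q - n0‖ ≤ η) (w : E2) :
    ∀ᶠ s : ℝ in 𝓝[>] 0, ∃ y ∈ S, π y = π q + s • w ∧ |⟪n0, y - q⟫| ≤ 3 * η * s * ‖w‖ := by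
  by_cases hw : w = 0
  · refine Eventually.of_forall fun s => ⟨q, hq, ?_, ?_⟩ <;> simp [hw]
  obtain ⟨f, U, V, hU, hV, hqV, hfC, hinj, himg, hder⟩ := G.hS q hq
  obtain ⟨u, hu, rfl⟩ : q ∈ f '' U := by rw [himg]; exact ⟨hq, hqV⟩
  have hfS : f '' U ⊆ S := by rw [himg]; exact inter_subset_left
  have hstrict : HasStrictFDerivAt f (fderiv ℝ f u) u :=
    (hfC.contDiffAt (hU.mem_nhds hu)).hasStrictFDerivAt (by norm_num)
  set f' := fderiv ℝ f u
  have horth : ∀ v, ⟪n (f u), f' v⟫ = 0 := fun v =>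
    G.hn_orth _ hq _ (tangent_of_chart hU hfS hu hstrict.hasFDerivAt v)
  -- bound on the vertical part
  have hvert : ∀ v, |⟪n0, f' v⟫| ≤ 2 * η * ‖π (f' v)‖ := by
    intro v
    have h1 : ⟪n0, f' v⟫ = - ⟪n (f u) - n0, f' v⟫ := by rw [inner_sub_left, horth]; ring
    have h2 : |⟪n0, f' v⟫| ≤ η * ‖f' v‖ := by
      rw [h1, abs_neg]
      exact (abs_real_inner_le_norm _ _).trans (by gcongr)
    have h3 := hF.le_norm_pi _ h2
    have h4 : ‖f' v‖ ≤ 2 * ‖π (f' v)‖ := by nlinarith [norm_nonneg (f' v)]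
    nlinarith
  have hinj' : Function.Injective ((π ∘L f' : E2 →L[ℝ] E2) : E2 →ₗ[ℝ] E2) := by
    rw [← LinearMap.ker_eq_bot, LinearMap.ker_eq_bot']
    intro v hv
    have hv' : π (f' v) = 0 := hv
    have h1 := hvert v
    rw [hv'] at h1
    have h2 : ⟪n0, f' v⟫ = 0 := by simpa using h1
    have h3 := hF.decomp (f' v)
    rw [hv', h2] at h3
    apply hder u hu
    rw [map_zero]; simpa using h3
  let e : E2 ≃L[ℝ] E2 := (LinearEquiv.ofInjectiveEndo _ hinj').toContinuousLinearEquiv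
  have he : (e : E2 →L[ℝ] E2) = π ∘L f' := by ext v; rfl
  have hG : HasStrictFDerivAt (π ∘ f) (e : E2 →L[ℝ] E2) u := by
    rw [he]; exact π.hasStrictFDerivAt.comp u hstrict
  let g := hG.localInverse
  have hg : HasStrictFDerivAt g (e.symm : E2 →L[ℝ] E2) (π (f u)) := hG.to_localInverse
  have hgr : ∀ᶠ y in 𝓝 (π (f u)), π (f (g y)) = y := hG.eventually_right_inverse
  have hgu : g (π (f u)) = u := hG.localInverse_apply_image
  have hline : HasDerivAt (fun s : ℝ => π (f u) + s • w) w 0 := by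
    simpa using ((hasDerivAt_id (0:ℝ)).smul_const w).const_add (π (f u))
  have hgl : HasDerivAt (fun s : ℝ => g (π (f u) + s • w)) (e.symm w) 0 := by
    have hd' : HasFDerivAt g (e.symm : E2 →L[ℝ] E2) (π (f u) + (0:ℝ) • w) := by
      simpa using hg.hasFDerivAt
    exact hd'.comp_hasDerivAt (0:ℝ) hline
  have hy : HasDerivAt (fun s : ℝ => f (g (π (f u) + s • w))) (f' (e.symm w)) 0 := by
    have hd' : HasFDerivAt f f' (g (π (f u) + (0:ℝ) • w)) := by
      simpa [hgu] using hstrict.hasFDerivAt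
    exact hd'.comp_hasDerivAt (0:ℝ) hgl
  have hpw : π (f' (e.symm w)) = w := by
    have : (e : E2 →L[ℝ] E2) (e.symm w) = w := e.apply_symm_apply w
    rw [he] at this; exact this
  have hvw := hvert (e.symm w)
  rw [hpw] at hvw
  have hz : HasDerivAt (fun s : ℝ => ⟪n0, f (g (π (f u) + s • w)) - f u⟫) ⟪n0, f' (e.symm w)⟫ 0 := by
    have := ((innerSL ℝ n0).hasFDerivAt (x := f (g (π (f u) + (0:ℝ) • w)) - f u)).comp_hasDerivAt (0:ℝ) (hy.sub_const (f u))
    simpa [Function.comp_def] using this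
  have hwpos : 0 < ‖w‖ := norm_pos_iff.2 hw
  have hlit := (hasDerivAt_iff_isLittleO.1 hz).def (mul_pos hη hwpos)
  have hev1 : ∀ᶠ s : ℝ in 𝓝 0, g (π (f u) + s • w) ∈ U := by
    apply hgl.continuousAt.eventually_mem
    simpa [hgu] using hU.mem_nhds hu
  have hev2 : ∀ᶠ s : ℝ in 𝓝 0, π (f (g (π (f u) + s • w))) = π (f u) + s • w := by
    have : Tendsto (fun s : ℝ => π (f u) + s • w) (𝓝 0) (𝓝 (π (f u))) := by
      simpa using hline.continuousAt.tendsto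
    exact this.eventually hgr
  filter_upwards [nhdsWithin_le_nhds hev1, nhdsWithin_le_nhds hev2, nhdsWithin_le_nhds hlit, self_mem_nhdsWithin] with s h1 h2 h3 hs
  have hs : 0 < s := hs
  refine ⟨_, hfS ⟨_, h1, rfl⟩, h2, ?_⟩
  simp only [zero_smul, add_zero, hgu, sub_self, inner_zero_right, sub_zero, smul_eq_mul, Real.norm_eq_abs, abs_of_pos hs] at h3
  set c := ⟪n0, f' (e.symm w)⟫
  set Z := ⟪n0, f (g (π (f u) + s • w)) - f u⟫
  have h4 : |Z| ≤ |Z - s * c| + |s * c| := by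
    have := abs_add_le (Z - s * c) (s * c); simpa using this
  rw [abs_mul, abs_of_pos hs] at h4
  nlinarith

lemma lift {S Ωm Ωp : Set E3} {n : E3 → E3} (G : Geo S Ωm Ωp n) {n0 π ι}
    (hF : IsFrame n0 π ι) (hn0 : ‖n0‖ = 1) {η : ℝ} (hη : 0 < η) (hη2 : η ≤ 1 / 6) {p : E3} {R : ℝ}
    (hR : 0 < R) (hnR : ∀ q ∈ S, ‖q - p‖ < 4 * R → ‖n q - n0‖ ≤ η) {x : E3} (hx : x ∈ S)
    (hxp : ‖x - p‖ < R) (b : E2) (hb : ‖b‖ ≤ 2 * R) :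
    ∃ y ∈ S, π y = π x + b ∧ |⟪n0, y - x⟫| ≤ 3 * η * ‖b‖ ∧ ‖y - p‖ < 4 * R := by
  have hnear : ∀ s ∈ Icc (0:ℝ) 1, ∀ y, π y = π x + s • b → |⟪n0, y - x⟫| ≤ 3 * η * s * ‖b‖ →
      ‖y - p‖ < 4 * R := by
    intro s hs y h1 h2
    have h3 : y - x = ι (s • b) + ⟪n0, y - x⟫ • n0 := by
      conv_lhs => rw [hF.decomp (y - x)]
      rw [map_sub, h1, add_sub_cancel_left]
    have h4 : ‖y - x‖ ≤ s * ‖b‖ + 3 * η * s * ‖b‖ := by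
      conv_lhs => rw [h3]
      refine (norm_add_le _ _).trans ?_
      rw [hF.norm_iota, norm_smul, norm_smul, hn0, Real.norm_of_nonneg hs.1, mul_one]
      gcongr; exact h2
    have h5 : ‖y - p‖ ≤ ‖y - x‖ + ‖x - p‖ := by
      have := norm_add_le (y - x) (x - p); simpa using this
    have h6 : s * ‖b‖ ≤ 2 * R := by nlinarith [hs.1, hs.2, norm_nonneg b]
    have h7 : 3 * η * s * ‖b‖ ≤ 1 / 2 * (s * ‖b‖) := by
      have : 0 ≤ s * ‖b‖ := mul_nonneg hs.1 (norm_nonneg _)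
      nlinarith
    linarith
  let T : Set ℝ := {s | ∃ y ∈ S, π y = π x + s • b ∧ |⟪n0, y - x⟫| ≤ 3 * η * s * ‖b‖}
  have hclosed : IsClosed (T ∩ Icc 0 1) := by
    have hC : IsCompact ((Icc (0:ℝ) 1 ×ˢ S) ∩ {z : ℝ × E3 | π z.2 = π x + z.1 • b ∧ |⟪n0, z.2 - x⟫| ≤ 3 * η * z.1 * ‖b‖}) := by
      apply (isCompact_Icc.prod G.hcpt).inter_right
      have c1 : IsClosed {z : ℝ × E3 | π z.2 = π x + z.1 • b} := isClosed_eq (by fun_prop) (by fun_prop)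
      have c2 : IsClosed {z : ℝ × E3 | |⟪n0, z.2 - x⟫| ≤ 3 * η * z.1 * ‖b‖} :=
        isClosed_le (by fun_prop) (by fun_prop)
      exact c1.inter c2
    convert (hC.image continuous_fst).isClosed using 1
    ext s
    constructor
    · rintro ⟨⟨y, hy, h1, h2⟩, hs⟩
      exact ⟨(s, y), ⟨⟨hs, hy⟩, h1, h2⟩, rfl⟩
    · rintro ⟨⟨s', y⟩, ⟨⟨hs, hy⟩, h1, h2⟩, rfl⟩
      exact ⟨⟨y, hy, h1, h2⟩, hs⟩
  have hsub : Icc (0:ℝ) 1 ⊆ T := by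
    apply hclosed.Icc_subset_of_forall_mem_nhdsWithin
    · exact ⟨x, hx, by simp, by simp⟩
    · rintro s ⟨⟨y, hy, h1, h2⟩, hs⟩
      have hyp := hnear s ⟨hs.1, hs.2.le⟩ y h1 h2
      have hst := local_step G hF hη hη2 hy (hnR y hy hyp) b
      have htend : Tendsto (fun s' : ℝ => s' - s) (𝓝[>] s) (𝓝[>] 0) := by
        apply tendsto_nhdsWithin_of_tendsto_nhds_of_eventually_within
        · have : Tendsto (fun s' : ℝ => s' - s) (𝓝 s) (𝓝 (s - s)) := (continuous_sub_right s).tendsto s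
          rw [sub_self] at this
          exact this.mono_left nhdsWithin_le_nhds
        · filter_upwards [self_mem_nhdsWithin] with s' hs'
          exact sub_pos.2 (mem_Ioi.1 hs')
      filter_upwards [htend.eventually hst] with s' ⟨y', hy', h3, h4⟩
      refine ⟨y', hy', ?_, ?_⟩
      · rw [h3, h1]; module
      · have h5 : ⟪n0, y' - x⟫ = ⟪n0, y' - y⟫ + ⟪n0, y - x⟫ := by
          rw [← inner_add_right]; simp
        rw [h5]
        refine (abs_add_le _ _).trans ?_
        calc _ ≤ 3 * η * (s' - s) * ‖b‖ + 3 * η * s * ‖b‖ := add_le_add h4 h2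
          _ = _ := by ring
  obtain ⟨y, hy, h1, h2⟩ := hsub (right_mem_Icc.2 zero_le_one)
  have := hnear 1 (right_mem_Icc.2 zero_le_one) y h1 h2
  exact ⟨y, hy, by simpa using h1, by simpa using h2, this⟩

lemma Geo.exists_R {S Ωm Ωp : Set E3} {n : E3 → E3} (G : Geo S Ωm Ωp n) {p : E3} (hp : p ∈ S)
    {η : ℝ} (hη : 0 < η) : ∃ R > 0, ∀ q ∈ S, ‖q - p‖ < 4 * R → ‖n q - n p‖ ≤ η := by
  obtain ⟨r, hr, h⟩ := Metric.continuousOn_iff.1 G.hn_cont p hp η hη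
  refine ⟨r / 4, by positivity, fun q hq hqp => ?_⟩
  have := h q hq (by rw [dist_eq_norm]; linarith)
  rw [dist_eq_norm] at this
  exact this.le

lemma Geo.disj {S Ωm Ωp : Set E3} {n : E3 → E3} (G : Geo S Ωm Ωp n) :
    (∀ x ∈ S, x ∉ Ωm) ∧ (∀ x ∈ S, x ∉ Ωp) ∧ (∀ x ∈ Ωp, x ∉ Ωm) := by
  have h2 := G.henc.fr
  have h3 := G.henc.plus
  refine ⟨fun x hx hm => ?_, fun x hx hp => ?_, fun x hx hm => ?_⟩
  · rw [← h2, G.henc.openm.frontier_eq] at hx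
    exact hx.2 hm
  · rw [h3] at hp; exact hp (Or.inr hx)
  · rw [h3] at hx; exact hx (Or.inl hm)

lemma Geo.cone {S Ωm Ωp : Set E3} {n : E3 → E3} (G : Geo S Ωm Ωp n) {p : E3} (hp : p ∈ S)
    {δ : ℝ} (hδ : 0 < δ) : ∃ r > 0, ∀ x ∈ S, ‖x - p‖ < r → |⟪n p, x - p⟫| ≤ δ * ‖x - p‖ := by
  obtain ⟨π, ι, hF⟩ := exists_frame (n p) (G.hn_unit p hp)
  set η := min (δ / 3) (1 / 6) with hηdef
  have hη : 0 < η := by positivity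
  have hη2 : η ≤ 1 / 6 := min_le_right _ _
  have hη3 : 3 * η ≤ δ := by have := min_le_left (δ / 3) (1 / 6); linarith
  obtain ⟨R, hR, hnR⟩ := G.exists_R hp hη
  obtain ⟨ε, hε, hout⟩ := G.hn_out p hp
  refine ⟨min R (ε / 2), by positivity, fun x hx hxp => ?_⟩
  have hxR : ‖x - p‖ < R := hxp.trans_le (min_le_left _ _)
  have hxε : ‖x - p‖ < ε / 2 := hxp.trans_le (min_le_right _ _)
  have hbx : ‖π (p - x)‖ ≤ ‖x - p‖ := by rw [norm_sub_rev]; exact hF.norm_pi_le _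
  obtain ⟨y, hy, h1, h2, -⟩ := lift G hF (G.hn_unit p hp) hη hη2 hR hnR hx hxR (π (p - x)) (by linarith)
  have hyz : y = p + ⟪n p, y - p⟫ • n p := by
    have h3 := hF.decomp (y - p)
    have h4 : π (y - p) = 0 := by rw [map_sub, h1, map_sub]; simp
    rw [h4, map_zero, zero_add] at h3
    rw [← h3]; simp
  set z := ⟪n p, y - p⟫ with hz
  have hsum : ⟪n p, y - x⟫ = z - ⟪n p, x - p⟫ := by rw [hz, ← inner_sub_right]; simp
  have hin : |⟪n p, x - p⟫| ≤ ‖x - p‖ := by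
    have := abs_real_inner_le_norm (n p) (x - p)
    rwa [G.hn_unit p hp, one_mul] at this
  have hzlt : |z| < ε := by
    have : |z| ≤ |⟪n p, y - x⟫| + |⟪n p, x - p⟫| := by
      have := abs_add_le ⟪n p, y - x⟫ ⟪n p, x - p⟫
      rw [hsum] at this ⊢; simpa using this
    nlinarith [norm_nonneg (π (p - x))]
  have hz0 : z = 0 := by
    rcases lt_trichotomy z 0 with h | h | h
    · have := (hout (-z) (by linarith) (by rw [abs_of_neg h] at hzlt; exact hzlt)).2
      rw [sub_eq_add_neg, neg_smul, neg_neg, ← hyz] at this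
      exact (G.disj.1 y hy this).elim
    · exact h
    · have := (hout z h (by rw [abs_of_pos h] at hzlt; exact hzlt)).1
      rw [← hyz] at this
      exact (G.disj.2.1 y hy this).elim
  rw [hsum, hz0, zero_sub, abs_neg] at h2
  calc _ ≤ 3 * η * ‖π (p - x)‖ := h2
    _ ≤ δ * ‖x - p‖ := by gcongr

lemma Geo.seg {S Ωm Ωp : Set E3} {n : E3 → E3} (G : Geo S Ωm Ωp n) {x y : E3}
    (hx : x ∈ Ωm) (hxy : ∀ z ∈ segment ℝ x y, z ∉ S) : y ∈ Ωm := by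
  by_contra hy
  have h := (convex_segment x y).isPreconnected
  have key : ∀ z ∈ segment ℝ x y, z ∈ Ωm ∨ z ∈ (closure Ωm)ᶜ := by
    intro z hz
    by_contra! hc
    apply hxy z hz
    rw [← G.henc.fr, G.henc.openm.frontier_eq]
    exact ⟨not_not.1 hc.2, hc.1⟩
  obtain ⟨z, -, hz1, hz2⟩ := h Ωm (closure Ωm)ᶜ G.henc.openm isClosed_closure.isOpen_compl key
    ⟨x, left_mem_segment ℝ x y, hx⟩
    ⟨y, right_mem_segment ℝ x y, (key y (right_mem_segment ℝ x y)).resolve_left hy⟩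
  exact hz2 (subset_closure hz1)

lemma Geo.updown {S Ωm Ωp : Set E3} {n : E3 → E3} (G : Geo S Ωm Ωp n) {q : E3} (hq : q ∈ S)
    {v : E3} (hv : ‖v‖ = 1) (hpos : 0 < ⟪n q, v⟫) :
    ∃ τ > (0:ℝ), ∀ t, 0 < t → t < τ → q + t • v ∉ S ∧ q + t • v ∉ Ωm ∧ q - t • v ∈ Ωm := by
  have hle : ⟪n q, v⟫ ≤ 1 := by
    have := real_inner_le_norm (n q) v
    rwa [G.hn_unit q hq, hv, one_mul] at this
  set m := ⟪n q, v⟫ with hm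
  obtain ⟨r, hr, hcone⟩ := G.cone hq (δ := m / 2) (by positivity)
  obtain ⟨ε, hε, hout⟩ := G.hn_out q hq
  -- points of the cone are not on `S`
  have hoff : ∀ w : E3, ‖w‖ ≤ 1 → m ≤ ⟪n q, w⟫ → ∀ s : ℝ, s ≠ 0 → |s| < r → q + s • w ∉ S := by
    intro w hw hmw s hs hsr hS
    have h1 : ‖s • w‖ ≤ |s| := by
      rw [norm_smul, Real.norm_eq_abs]; nlinarith [abs_nonneg s]
    have h2 := hcone _ hS (by simpa using h1.trans_lt hsr)
    rw [add_sub_cancel_left, inner_smul_right, abs_mul] at h2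
    have h3 : m ≤ |⟪n q, w⟫| := hmw.trans (le_abs_self _)
    have h4 : 0 < |s| := abs_pos.2 hs
    nlinarith
  have hcomb : ∀ a b : ℝ, 0 ≤ a → 0 ≤ b → a + b = 1 → ‖a • n q + b • v‖ ≤ 1 ∧ m ≤ ⟪n q, a • n q + b • v⟫ := by
    intro a b ha hb hab
    constructor
    · refine (norm_add_le _ _).trans ?_
      rw [norm_smul, norm_smul, hv, G.hn_unit q hq, Real.norm_of_nonneg ha, Real.norm_of_nonneg hb]
      linarith
    · rw [inner_add_right, inner_smul_right, inner_smul_right, real_inner_self_eq_norm_sq, G.hn_unit q hq, ← hm]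
      nlinarith
  have hsegoff : ∀ s : ℝ, s ≠ 0 → |s| < r → ∀ z ∈ segment ℝ (q + s • n q) (q + s • v), z ∉ S := by
    rintro s hs hsr z ⟨a, b, ha, hb, hab, rfl⟩
    have e : a • (q + s • n q) + b • (q + s • v) = q + s • (a • n q + b • v) := by
      obtain rfl : b = 1 - a := by linarith
      module
    rw [e]
    exact hoff _ (hcomb a b ha hb hab).1 (hcomb a b ha hb hab).2 s hs hsr
  refine ⟨min r ε, by positivity, fun t ht htm => ?_⟩
  have htr : |t| < r := by rw [abs_of_pos ht]; exact htm.trans_le (min_le_left _ _)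
  have hto := hout t ht (htm.trans_le (min_le_right _ _))
  refine ⟨hoff v hv.le hm.le t ht.ne' htr, fun hmem => ?_, ?_⟩
  · refine G.disj.2.2 _ hto.1 (G.seg hmem ?_)
    rw [segment_symm]
    exact hsegoff t ht.ne' htr
  · rw [sub_eq_add_neg, ← neg_smul]
    refine G.seg (x := q + (-t) • n q) ?_ (hsegoff (-t) (by linarith) (by rwa [abs_neg]))
    rw [neg_smul, ← sub_eq_add_neg]; exact hto.2

lemma Geo.uniq {S Ωm Ωp : Set E3} {n : E3 → E3} (G : Geo S Ωm Ωp n) {p n0 : E3} (hn0 : ‖n0‖ = 1)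
    {η : ℝ} (hη2 : η ≤ 1 / 6) {R : ℝ}
    (hnR : ∀ q ∈ S, ‖q - p‖ < 4 * R → ‖n q - n0‖ ≤ η) {x : E3} (hx : x ∈ S)
    (hxp : ‖x - p‖ < 4 * R) {c : ℝ} (hc : 0 < c) (hy : x + c • n0 ∈ S) (hyp : ‖x + c • n0 - p‖ < 4 * R) :
    False := by
  have hpos : ∀ q ∈ S, ‖q - p‖ < 4 * R → 0 < ⟪n q, n0⟫ := by
    intro q hq hqp
    have h1 := hnR q hq hqp
    have h2 : ⟪n q, n0⟫ = 1 + ⟪n q - n0, n0⟫ := by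
      rw [inner_sub_left, real_inner_self_eq_norm_sq, hn0]; ring
    have h3 := abs_real_inner_le_norm (n q - n0) n0
    rw [hn0, mul_one] at h3
    have := (abs_le.1 h3).1
    linarith
  obtain ⟨τ, hτ, hup⟩ := G.updown hx hn0 (hpos x hx hxp)
  have hτc : τ ≤ c := by
    by_contra! h
    exact (hup c hc h).1 hy
  let K : Set ℝ := Icc (τ / 2) c ∩ {s | x + s • n0 ∈ S}
  have hKc : IsCompact K := isCompact_Icc.inter_right
    (G.hcpt.isClosed.preimage (by fun_prop : Continuous fun s : ℝ => x + s • n0))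
  obtain ⟨s, ⟨hsI, hsS⟩, hmin⟩ := hKc.exists_isMinOn ⟨c, ⟨by linarith, le_rfl⟩, hy⟩ continuousOn_id
  have hmin' : ∀ s', 0 < s' → s' < s → x + s' • n0 ∉ S := by
    intro s' h0 h1 h2
    by_cases h3 : s' < τ
    · exact (hup s' h0 h3).1 h2
    · have : s ≤ s' := hmin (a := s') ⟨⟨by linarith, by linarith [hsI.2]⟩, h2⟩
      linarith
  have hs0 : 0 < s := by linarith [hsI.1]
  have hsp : ‖x + s • n0 - p‖ < 4 * R := by
    have hconv := convex_ball p (4 * R)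
    have h1 : x ∈ Metric.ball p (4 * R) := by rwa [mem_ball_iff_norm]
    have h2 : x + c • n0 ∈ Metric.ball p (4 * R) := by rwa [mem_ball_iff_norm]
    have h3 := hconv h1 h2 (a := 1 - s / c) (b := s / c) (by
      have : s / c ≤ 1 := by rw [div_le_one hc]; exact hsI.2
      linarith) (by positivity) (by ring)
    have e : (1 - s / c) • x + (s / c) • (x + c • n0) = x + s • n0 := by
      have : s = s / c * c := by field_simp
      conv_rhs => rw [this]
      module
    rw [e, mem_ball_iff_norm] at h3
    exact h3
  obtain ⟨τ', hτ', hdown⟩ := G.updown hsS hn0 (hpos _ hsS hsp)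
  set a := min (τ / 2) (s / 4)
  set b := min (τ' / 2) (s / 4)
  have ha : 0 < a := by positivity
  have hb : 0 < b := by positivity
  have ha1 : a ≤ τ / 2 := min_le_left _ _
  have ha2 : a ≤ s / 4 := min_le_right _ _
  have hb1 : b ≤ τ' / 2 := min_le_left _ _
  have hb2 : b ≤ s / 4 := min_le_right _ _
  have h1 := (hup a ha (by linarith)).2.1
  have h2 := (hdown b hb (by linarith)).2.2
  apply h1
  refine G.seg h2 ?_
  rintro z ⟨u, v, hu, hv, huv, rfl⟩
  have e : u • (x + s • n0 - b • n0) + v • (x + a • n0) = x + (u * (s - b) + v * a) • n0 := by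
    obtain rfl : u = 1 - v := by linarith
    module
  rw [e]
  have hu' : u = 1 - v := by linarith
  apply hmin'
  · subst hu'
    nlinarith
  · subst hu'
    nlinarith

lemma Geo.flat {S Ωm Ωp : Set E3} {n : E3 → E3} (G : Geo S Ωm Ωp n) {p : E3} (hp : p ∈ S)
    {δ : ℝ} (hδ : 0 < δ) : ∃ r > 0, ∀ x ∈ S, ∀ y ∈ S, ‖x - p‖ < r → ‖y - p‖ < r →
      |⟪n p, x - y⟫| ≤ δ * ‖x - y‖ := by
  have hn0 := G.hn_unit p hp
  obtain ⟨π, ι, hF⟩ := exists_frame (n p) hn0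
  set η := min (δ / 3) (1 / 6) with hηdef
  have hη : 0 < η := by positivity
  have hη2 : η ≤ 1 / 6 := min_le_right _ _
  have hη3 : 3 * η ≤ δ := by have := min_le_left (δ / 3) (1 / 6); linarith
  obtain ⟨R, hR, hnR⟩ := G.exists_R hp hη
  refine ⟨R, hR, fun y hy x hx hyp hxp => ?_⟩
  have hbx : ‖π (y - x)‖ ≤ ‖y - x‖ := hF.norm_pi_le _
  have hyx : ‖y - x‖ ≤ ‖y - p‖ + ‖x - p‖ := by
    have := norm_sub_le (y - p) (x - p); simpa using this
  obtain ⟨y', hy', h1, h2, h3⟩ := lift G hF hn0 hη hη2 hR hnR hx hxp (π (y - x)) (by linarith)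
  have hyz : y' = y + ⟪n p, y' - y⟫ • n p := by
    have h3 := hF.decomp (y' - y)
    have h4 : π (y' - y) = 0 := by rw [map_sub, h1, map_sub]; simp
    rw [h4, map_zero, zero_add] at h3
    rw [← h3]; simp
  set c := ⟪n p, y' - y⟫ with hc
  have hc0 : c = 0 := by
    rcases lt_trichotomy c 0 with h | h | h
    · have e : y = y' + (-c) • n p := by rw [hyz]; module
      exact (G.uniq hn0 hη2 hnR hy' h3 (c := -c) (by linarith) (by rwa [← e]) (by rw [← e]; linarith)).elim
    · exact h
    · exact (G.uniq hn0 hη2 hnR hy (by linarith) h (by rwa [← hyz]) (by rwa [← hyz])).elim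
  rw [hc0, zero_smul, add_zero] at hyz
  rw [hyz] at h2
  calc _ ≤ 3 * η * ‖π (y - x)‖ := h2
    _ ≤ δ * ‖y - x‖ := by gcongr

lemma Geo.measure_lt_top {S Ωm Ωp : Set E3} {n : E3 → E3} (G : Geo S Ωm Ωp n) :
    μH[2] S < ⊤ := by
  apply G.hcpt.measure_lt_top_of_nhdsWithin
  intro p hp
  obtain ⟨π, ι, hF⟩ := exists_frame (n p) (G.hn_unit p hp)
  obtain ⟨r, hr, hfl⟩ := G.flat hp (δ := 1 / 2) (by norm_num)
  refine ⟨S ∩ Metric.ball p r, inter_mem self_mem_nhdsWithin (nhdsWithin_le_nhds (Metric.ball_mem_nhds p hr)), ?_⟩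
  have h1 := hausdorff_le_of_expand (S ∩ Metric.ball p r) π (1 / 2) (by norm_num) (by
    rintro x ⟨hx, hxp⟩ y ⟨hy, hyp⟩
    rw [mem_ball_iff_norm] at hxp hyp
    have := hF.le_norm_pi _ (hfl x hx y hy hxp hyp)
    rw [dist_eq_norm, dist_eq_norm, ← map_sub]
    linarith)
  have h2 : μH[2] (π '' (S ∩ Metric.ball p r)) < ⊤ := by
    apply lt_of_le_of_lt (measure_mono _) (measure_ball_lt_top (μ := (μH[2] : Measure E2)) (x := π p) (r := r))
    rintro _ ⟨x, ⟨-, hx⟩, rfl⟩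
    rw [mem_ball_iff_norm] at hx ⊢
    rw [← map_sub]
    exact (hF.norm_pi_le _).trans_lt hx
  by_contra h
  rw [not_lt, top_le_iff] at h
  rw [h, ENNReal.mul_top (by simp)] at h1
  exact absurd h2 (not_lt.2 h1)

lemma Geo.measure_pos {S Ωm Ωp : Set E3} {n : E3 → E3} (G : Geo S Ωm Ωp n) (hne : S.Nonempty) :
    0 < μH[2] S := by
  obtain ⟨p, hp⟩ := hne
  have hn0 := G.hn_unit p hp
  obtain ⟨π, ι, hF⟩ := exists_frame (n p) hn0
  obtain ⟨R, hR, hnR⟩ := G.exists_R hp (η := 1 / 6) (by norm_num)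
  refine lt_of_lt_of_le ?_ (hF.hausdorff_pi_le S)
  refine lt_of_lt_of_le (Metric.measure_ball_pos (μH[2] : Measure E2) (π p) hR) (measure_mono ?_)
  intro w hw
  rw [mem_ball_iff_norm] at hw
  obtain ⟨y, hy, h1, -⟩ := lift G hF hn0 (by norm_num) le_rfl hR hnR hp (by simpa using hR) (w - π p) (by linarith)
  exact ⟨y, hy, by rw [h1]; simp⟩

structure IsFlow (X : E3 → E3) (α : E3 → ℝ → E3) : Prop where
  zero : ∀ x, α x 0 = x
  deriv : ∀ x, ∀ t ∈ Icc (0:ℝ) 1, HasDerivWithinAt (α x) (X (α x t)) (Icc 0 1) t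

lemma exists_flow {X : E3 → E3} {K L : NNReal} (hX : LipschitzWith K X) (hL : ∀ x, ‖X x‖ ≤ L) :
    ∃ α, IsFlow X α := by
  have h : ∀ x : E3, ∃ α : ℝ → E3, α 0 = x ∧ ∀ t ∈ Icc (0:ℝ) 1, HasDerivWithinAt α (X (α t)) (Icc 0 1) t := by
    intro x
    have hp : IsPicardLindelof (fun _ => X) (⟨0, by simp⟩ : Icc (0:ℝ) 1) x L 0 L K :=
      IsPicardLindelof.of_time_independent (fun y _ => hL y) hX.lipschitzOnWith (by simp)
    exact hp.exists_eq_forall_mem_Icc_hasDerivWithinAt₀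
  choose α h0 h1 using h
  exact ⟨α, h0, h1⟩

lemma IsFlow.cont {X α} (h : IsFlow X α) (x : E3) : ContinuousOn (α x) (Icc 0 1) :=
  fun t ht => (h.deriv x t ht).continuousWithinAt

lemma IsFlow.derivR {X α} (h : IsFlow X α) (x : E3) : ∀ t ∈ Ico (0:ℝ) 1,
    HasDerivWithinAt (α x) (X (α x t)) (Ici t) t := fun t ht =>
  (h.deriv x t (Ico_subset_Icc_self ht)).mono_of_mem_nhdsWithin (Icc_mem_nhdsGE_of_mem ht)

lemma IsFlow.invariant {X α} (h : IsFlow X α) {K : NNReal} (hX : LipschitzWith K X) {S : Set E3}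
    (hS : IsCompact S) (htan : ∀ p ∈ S, IsTangentAt S p (X p)) {x : E3} (hx : x ∈ S) :
    ∀ t ∈ Icc (0:ℝ) 1, α x t ∈ S := by
  have hne : S.Nonempty := ⟨x, hx⟩
  have hcont : ContinuousOn (fun t => Metric.infDist (α x t) S) (Icc 0 1) :=
    (Metric.continuous_infDist_pt S).comp_continuousOn (h.cont x)
  have hg := le_gronwallBound_of_liminf_deriv_right_le (f := fun t => Metric.infDist (α x t) S)
    (f' := fun t => K * Metric.infDist (α x t) S) (δ := 0) (K := K) (ε := 0) (a := 0) (b := 1) hcont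
    ?_ ?_ ?_
  · intro t ht
    have h1 := hg t ht
    rw [gronwallBound_ε0_δ0] at h1
    rw [hS.isClosed.mem_iff_infDist_zero hne]
    exact le_antisymm h1 Metric.infDist_nonneg
  · intro t ht r hr
    obtain ⟨y, hy, hyd⟩ := hS.exists_infDist_eq_dist hne (α x t)
    obtain ⟨γ, hγS, hγ0, hγd⟩ := htan y hy
    have hγ' : HasDerivWithinAt (fun z => γ (z - t)) (X y) (Ici t) t := by
      have h1 : HasDerivAt γ (X y) (t - t) := by simpa using hγd
      exact (h1.comp_sub_const t t).hasDerivWithinAt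
    have hD := (h.derivR x t ht).sub hγ'
    have hlt : ‖X (α x t) - X y‖ < r := by
      refine lt_of_le_of_lt ?_ hr
      have := hX.dist_le_mul (α x t) y
      rw [dist_eq_norm] at this
      change _ ≤ K * Metric.infDist (α x t) S
      rw [hyd]; exact this
    have hev := (hD.limsup_slope_norm_le hlt)
    have hev' := nhdsWithin_mono t Ioi_subset_Ici_self hev
    refine Eventually.frequently ?_
    filter_upwards [hev', self_mem_nhdsWithin] with z hz hzt
    have hzt : t < z := hzt
    refine lt_of_le_of_lt ?_ hz
    rw [Real.norm_of_nonneg (by linarith)]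
    have hinv : 0 ≤ (z - t)⁻¹ := inv_nonneg.2 (by linarith)
    apply mul_le_mul_of_nonneg_left _ hinv
    have e1 : ‖(α x - fun z => γ (z - t)) t‖ = Metric.infDist (α x t) S := by
      rw [hyd, dist_eq_norm]; simp [hγ0]
    rw [e1]
    have e2 : Metric.infDist (α x z) S ≤ ‖(α x - fun z => γ (z - t)) z‖ := by
      have := Metric.infDist_le_dist_of_mem (x := α x z) (hγS (z - t))
      rwa [dist_eq_norm] at this
    linarith
  · simp [h.zero, Metric.infDist_zero_of_mem hx]
  · intro t _; simp

lemma IsFlow.dist_le {X α} (h : IsFlow X α) {K : NNReal} (hX : LipschitzWith K X) (x y : E3) {t : ℝ}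
    (ht : t ∈ Icc (0:ℝ) 1) (htK : t * K ≤ 1 / 8) : ‖α x t - α y t‖ ≤ 2 * ‖x - y‖ := by
  have h1 := dist_le_of_trajectories_ODE (v := fun _ => X) (fun _ => hX) (h.cont x) (h.derivR x) (h.cont y)
    (h.derivR y) (δ := ‖x - y‖) (by rw [h.zero, h.zero, dist_eq_norm]) t ht
  rw [dist_eq_norm, sub_zero] at h1
  have h2 : Real.exp (K * t) ≤ 2 := by
    have h3 : (K:ℝ) * t ≤ 1 / 8 := by linarith
    have h4 := Real.exp_bound_div_one_sub_of_interval (x := 1 / 8) (by norm_num) (by norm_num)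
    have h5 := Real.exp_le_exp.2 h3
    have h6 : Real.exp (1 / 8) ≤ 2 := h4.trans (by norm_num)
    exact h5.trans h6
  nlinarith [norm_nonneg (x - y)]

lemma IsFlow.near_id {X α} (h : IsFlow X α) {K : NNReal} (hX : LipschitzWith K X) (x y : E3) {t : ℝ}
    (ht : t ∈ Icc (0:ℝ) 1) (htK : t * K ≤ 1 / 8) :
    ‖α x t - α y t - (x - y)‖ ≤ 2 * K * t * ‖x - y‖ := by
  have hsub : Icc 0 t ⊆ Icc (0:ℝ) 1 := Icc_subset_Icc le_rfl ht.2
  have := norm_image_sub_le_of_norm_deriv_le_segment' (f := fun s => α x s - α y s)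
    (f' := fun s => X (α x s) - X (α y s)) (a := 0) (b := t) (C := 2 * K * ‖x - y‖)
    (fun s hs => ((h.deriv x s (hsub hs)).sub (h.deriv y s (hsub hs))).mono hsub) ?_ t ⟨ht.1, le_rfl⟩
  · rw [h.zero, h.zero] at this
    linarith
  · intro s hs
    have h1 := hX.dist_le_mul (α x s) (α y s)
    rw [dist_eq_norm, dist_eq_norm] at h1
    have h2 := h.dist_le hX x y (hsub ⟨hs.1, hs.2.le⟩) (by nlinarith [hs.1, hs.2, K.2])
    calc _ ≤ _ := h1
      _ ≤ K * (2 * ‖x - y‖) := by gcongr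
      _ = _ := by ring

lemma IsFlow.moved {X α} (h : IsFlow X α) {L : NNReal} (hL : ∀ x, ‖X x‖ ≤ L) (x : E3) {t : ℝ}
    (ht : t ∈ Icc (0:ℝ) 1) : ‖α x t - x‖ ≤ L * t := by
  have := norm_image_sub_le_of_norm_deriv_le_segment' (h.deriv x) (fun s _ => hL (α x s)) t ht
  rwa [h.zero, sub_zero] at this

lemma IsFlow.expand {X α} (h : IsFlow X α) {K L : NNReal} (hX : LipschitzWith K X)
    (hL : ∀ x, ‖X x‖ ≤ L) (hd : Differentiable ℝ X) (huc : UniformContinuous (fderiv ℝ X)) {ε : ℝ}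
    (hε : 0 < ε) : ∀ᶠ t : ℝ in 𝓝[>] 0, ∀ q x y, ‖x - q‖ < t → ‖y - q‖ < t →
      ‖α x t - α y t - (x - y) - t • fderiv ℝ X q (x - y)‖ ≤ t * ε * ‖x - y‖ := by
  obtain ⟨η, hη, huc'⟩ := Metric.uniformContinuous_iff.1 huc (ε / 4) (by positivity)
  have small : ∀ c d : ℝ, 0 < d → ∀ᶠ t : ℝ in 𝓝[>] 0, t * c < d := by
    intro c d hd
    apply nhdsWithin_le_nhds
    have : Tendsto (fun t : ℝ => t * c) (𝓝 0) (𝓝 (0 * c)) := (continuous_mul_const c).tendsto 0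
    rw [zero_mul] at this
    exact this.eventually (gt_mem_nhds hd)
  filter_upwards [small 1 1 one_pos, small K (1 / 8) (by norm_num), small (4 * K ^ 2) ε hε, small (1 + L) η hη, self_mem_nhdsWithin]
    with t ht1 htK htK2 htL ht0 q x y hxq hyq
  have ht0 : 0 < t := ht0
  have ht : t ∈ Icc (0:ℝ) 1 := ⟨ht0.le, by linarith⟩
  have hsub : Icc 0 t ⊆ Icc (0:ℝ) 1 := Icc_subset_Icc le_rfl ht.2
  set A := fderiv ℝ X q
  have hA : ‖A‖ ≤ K := norm_fderiv_le_of_lipschitz ℝ hX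
  have := norm_image_sub_le_of_norm_deriv_le_segment' (f := fun s => α x s - α y s - s • A (x - y))
    (f' := fun s => X (α x s) - X (α y s) - A (x - y)) (a := 0) (b := t) (C := ε * ‖x - y‖)
    (fun s hs => by
      have h1 := ((h.deriv x s (hsub hs)).sub (h.deriv y s (hsub hs))).mono hsub
      have h2 := ((hasDerivWithinAt_id s (Icc 0 t)).smul_const (A (x - y)))
      have h3 := h1.sub h2
      rw [one_smul] at h3
      exact h3) ?_ t ⟨ht.1, le_rfl⟩
  · simp only [h.zero, zero_smul, sub_zero] at this
    have e : α x t - α y t - (x - y) - t • A (x - y) = α x t - α y t - t • A (x - y) - (x - y) := by abel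
    rw [e]; linarith
  · intro s hs
    have hs1 : s ∈ Icc (0:ℝ) 1 := hsub ⟨hs.1, hs.2.le⟩
    have hsK : s * K ≤ 1 / 8 := by nlinarith [hs.1, hs.2, K.2]
    have hball : ∀ z, ‖z - q‖ < t → α z s ∈ Metric.ball q η := by
      intro z hz
      rw [mem_ball_iff_norm]
      have h1 := h.moved hL z hs1
      have h2 : ‖α z s - q‖ ≤ ‖α z s - z‖ + ‖z - q‖ := by
        have := norm_add_le (α z s - z) (z - q); simpa using this
      have h3 : (L:ℝ) * s ≤ L * t := mul_le_mul_of_nonneg_left hs.2.le L.2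
      linarith
    have h1 := Convex.norm_image_sub_le_of_norm_fderiv_le' (𝕜 := ℝ) (f := X) (φ := A) (C := ε / 4)
      (s := Metric.ball q η) (fun z _ => hd z) (fun z hz => by
        have := huc' (a := z) (b := q) hz
        rw [dist_eq_norm] at this; exact this.le) (convex_ball q η) (hball y hyq) (hball x hxq)
    have h2 := h.dist_le hX x y hs1 hsK
    have h3 := h.near_id hX x y hs1 hsK
    have h4 : ‖A (α x s - α y s - (x - y))‖ ≤ K * (2 * K * s * ‖x - y‖) :=
      (A.le_opNorm _).trans (mul_le_mul hA h3 (norm_nonneg _) K.2)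
    have e : X (α x s) - X (α y s) - A (x - y) = (X (α x s) - X (α y s) - A (α x s - α y s)) + A (α x s - α y s - (x - y)) := by
      rw [map_sub A (α x s - α y s) (x - y)]; abel
    rw [e]
    refine (norm_add_le _ _).trans ?_
    have h5 : (K:ℝ) * (2 * K * s * ‖x - y‖) ≤ ε / 2 * ‖x - y‖ := by
      have : (K:ℝ) * (2 * K * s) ≤ ε / 2 := by nlinarith [hs.2, sq_nonneg (K:ℝ)]
      nlinarith [norm_nonneg (x - y)]
    nlinarith [norm_nonneg (x - y)]

lemma Geo.d_cont {S Ωm Ωp : Set E3} {n : E3 → E3} (G : Geo S Ωm Ωp n) {B : E3 → E3 →L[ℝ] E3}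
    (hB : ContinuousOn B S) : ContinuousOn (fun p => ⟪B p (n p), n p⟫) S :=
  (hB.clm_apply G.hn_cont).inner G.hn_cont

lemma Geo.d_int {S Ωm Ωp : Set E3} {n : E3 → E3} (G : Geo S Ωm Ωp n) {B : E3 → E3 →L[ℝ] E3}
    (hB : ContinuousOn B S) : IntegrableOn (fun p => ⟪B p (n p), n p⟫) S μH[2] := by
  obtain ⟨C, hC⟩ := G.hcpt.exists_bound_of_continuousOn (G.d_cont hB)
  exact IntegrableOn.of_bound G.measure_lt_top ((G.d_cont hB).aestronglyMeasurable G.hcpt.measurableSet) C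
    ((ae_restrict_iff' G.hcpt.measurableSet).2 (Eventually.of_forall hC))

lemma glue {S : Set E3} (hS : IsCompact S) {φ : E3 → E3} (hφ : Continuous φ) (hinj : Function.Injective φ)
    (f : E3 → ENNReal) (hloc : ∀ p ∈ S, ∃ r > 0, ∀ A, MeasurableSet A → A ⊆ Metric.ball p r ∩ S →
      ∫⁻ x in A, f x ∂μH[2] ≤ μH[2] (φ '' A)) :
    ∫⁻ x in S, f x ∂μH[2] ≤ μH[2] (φ '' S) := by
  have key : ∃ u, MeasurableSet u ∧ S ⊆ u ∧ ∀ A, MeasurableSet A → A ⊆ u ∩ S →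
      ∫⁻ x in A, f x ∂μH[2] ≤ μH[2] (φ '' A) := by
    refine hS.induction_on (p := fun s => ∃ u, MeasurableSet u ∧ s ⊆ u ∧ ∀ A, MeasurableSet A → A ⊆ u ∩ S →
      ∫⁻ x in A, f x ∂μH[2] ≤ μH[2] (φ '' A)) ?_ ?_ ?_ ?_
    · refine ⟨∅, MeasurableSet.empty, Subset.rfl, fun A _ hA => ?_⟩
      have : A = ∅ := by simpa using hA
      simp [this]
    · rintro s t hst ⟨u, h1, h2, h3⟩
      exact ⟨u, h1, hst.trans h2, h3⟩
    · rintro s t ⟨u, h1, h2, h3⟩ ⟨w, k1, k2, k3⟩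
      refine ⟨u ∪ w, h1.union k1, union_subset_union h2 k2, fun A hA hAu => ?_⟩
      have e : A = (A ∩ u) ∪ (A \ u) := (inter_union_sdiff A u).symm
      have hd : Disjoint (A ∩ u) (A \ u) := disjoint_sdiff_inter.symm
      have a1 := h3 (A ∩ u) (hA.inter h1) (fun x hx => ⟨hx.2, (hAu hx.1).2⟩)
      have a2 := k3 (A \ u) (hA.diff h1) (fun x hx => ⟨(hAu hx.1).1.resolve_left hx.2, (hAu hx.1).2⟩)
      have e2 : μH[2] (φ '' A) = μH[2] (φ '' (A ∩ u)) + μH[2] (φ '' (A \ u)) := by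
        conv_lhs => rw [e, image_union]
        exact measure_union (disjoint_image_of_injective hinj hd)
          ((hA.diff h1).image_of_continuousOn_injOn hφ.continuousOn hinj.injOn)
      have e3 : ∫⁻ x in A, f x ∂μH[2] = ∫⁻ x in A ∩ u, f x ∂μH[2] + ∫⁻ x in A \ u, f x ∂μH[2] := by
        conv_lhs => rw [e]
        exact lintegral_union (hA.diff h1) hd
      rw [e2, e3]
      exact add_le_add a1 a2
    · intro p hp
      obtain ⟨r, hr, h⟩ := hloc p hp
      exact ⟨Metric.ball p r, mem_nhdsWithin_of_mem_nhds (Metric.ball_mem_nhds p hr), Metric.ball p r,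
        measurableSet_ball, Subset.rfl, h⟩
  obtain ⟨u, _, h2, h3⟩ := key
  exact h3 S hS.measurableSet (fun x hx => ⟨h2 hx, hx⟩)

lemma one_sided {S Ωm Ωp : Set E3} {n : E3 → E3} (G : Geo S Ωm Ωp n) {X : E3 → E3}
    (hC : ContDiff ℝ 1 X) (hcs : HasCompactSupport X) (htan : ∀ p ∈ S, IsTangentAt S p (X p))
    (htr : ∀ p ∈ S, ∑ i, fderiv ℝ X p (e3 i) i = 0) :
    0 ≤ ∫ p in S, ⟪fderiv ℝ X p (n p), n p⟫ ∂μH[2] := by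
  obtain ⟨K, hK⟩ := ContDiff.lipschitzWith_of_hasCompactSupport hcs hC (by norm_num)
  obtain ⟨L0, hL0⟩ := hcs.exists_bound_of_continuous hC.continuous
  have hL : ∀ x, ‖X x‖ ≤ (L0.toNNReal : ℝ) := fun x => (hL0 x).trans (Real.le_coe_toNNReal _)
  have hDc : Continuous (fderiv ℝ X) := hC.continuous_fderiv (by norm_num)
  have huc : UniformContinuous (fderiv ℝ X) :=
    (hcs.fderiv (𝕜 := ℝ)).uniformContinuous_of_continuous hDc
  have hdiff : Differentiable ℝ X := hC.differentiable (by norm_num)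
  obtain ⟨α, hα⟩ := exists_flow hK hL
  have hA0 : ∀ p, ‖fderiv ℝ X p‖ ≤ K := fun p => norm_fderiv_le_of_lipschitz ℝ hK
  set d : E3 → ℝ := fun p => ⟪fderiv ℝ X p (n p), n p⟫ with hd
  have hdc : ContinuousOn d S := G.d_cont hDc.continuousOn
  have hdi : IntegrableOn d S μH[2] := G.d_int hDc.continuousOn
  have hdK : ∀ p ∈ S, d p ≤ K := by
    intro p hp
    have h1 := real_inner_le_norm (fderiv ℝ X p (n p)) (n p)
    have h2 := (fderiv ℝ X p).le_opNorm (n p)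
    rw [G.hn_unit p hp, mul_one] at h1 h2
    exact h1.trans (h2.trans (hA0 p))
  set m := (μH[2] : Measure E3).real S
  have hm : 0 ≤ m := measureReal_nonneg
  suffices hmain : ∀ ε > 0, - (31 * ε * m) ≤ ∫ p in S, d p ∂μH[2] by
    apply le_of_forall_pos_le_add
    intro δ hδ
    have := hmain (δ / (31 * (m + 1))) (by positivity)
    have h2 : 31 * (δ / (31 * (m + 1))) * m ≤ δ := by
      rw [show 31 * (δ / (31 * (m + 1))) * m = δ * (m / (m + 1)) by field_simp]
      have : m / (m + 1) ≤ 1 := by rw [div_le_one (by positivity)]; linarith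
      nlinarith
    linarith
  intro ε hε
  have small : ∀ c d : ℝ, 0 < d → ∀ᶠ t : ℝ in 𝓝[>] 0, t * c < d := by
    intro c d hd
    apply nhdsWithin_le_nhds
    have : Tendsto (fun t : ℝ => t * c) (𝓝 0) (𝓝 (0 * c)) := (continuous_mul_const c).tendsto 0
    rw [zero_mul] at this
    exact this.eventually (gt_mem_nhds hd)
  obtain ⟨t, hexp, ht1, htK, htε, htK2, ht0⟩ := ((hα.expand hK hL hdiff huc hε).and
    ((small 1 1 one_pos).and ((small K (1 / 8) (by norm_num)).and ((small ε (1 / 100) (by norm_num)).and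
    ((small (K ^ 2) ε hε).and self_mem_nhdsWithin))))).exists
  have ht0 : 0 < t := ht0
  have ht : t ∈ Icc (0:ℝ) 1 := ⟨ht0.le, by linarith⟩
  have hφc : Continuous (fun x => α x t) := by
    refine (LipschitzWith.of_dist_le_mul (K := 2) fun x y => ?_).continuous
    rw [dist_eq_norm, dist_eq_norm]
    exact hα.dist_le hK x y ht htK.le
  have hφi : Function.Injective (fun x => α x t) := by
    intro x y hxy
    have hxy : α x t = α y t := hxy
    have := hα.near_id hK x y ht htK.le
    rw [hxy, sub_self, zero_sub, norm_neg] at this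
    have h0 : ‖x - y‖ ≤ 0 := by nlinarith [norm_nonneg (x - y)]
    exact sub_eq_zero.1 (norm_le_zero_iff.1 h0)
  have hg := glue G.hcpt hφc hφi (fun x => ENNReal.ofReal (1 - t * d x - 31 * t * ε)) ?_
  · have himg : (fun x => α x t) '' S ⊆ S := by
      rintro _ ⟨x, hx, rfl⟩
      exact hα.invariant hK G.hcpt htan hx t ht
    have h1 := hg.trans (measure_mono himg)
    have hc : IntegrableOn (fun _ : E3 => (1 - 31 * t * ε : ℝ)) S μH[2] :=
      integrableOn_const G.measure_lt_top.ne
    have hfi : IntegrableOn (fun x => 1 - t * d x - 31 * t * ε) S μH[2] := by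
      have := hc.sub (hdi.const_mul t)
      refine this.congr (Eventually.of_forall fun x => ?_)
      simp only [Pi.sub_apply]; ring
    rw [← ofReal_integral_eq_lintegral_ofReal hfi
      ((ae_restrict_iff' G.hcpt.measurableSet).2 (Eventually.of_forall fun x hx => by
        have := hdK x hx
        simp only [Pi.zero_apply]; nlinarith))] at h1
    rw [ENNReal.ofReal_le_iff_le_toReal G.measure_lt_top.ne] at h1
    have e : ∫ x in S, (1 - t * d x - 31 * t * ε) ∂μH[2] = (1 - 31 * t * ε) * m - t * ∫ x in S, d x ∂μH[2] := by
      have : ∫ x in S, (1 - t * d x - 31 * t * ε) ∂μH[2] = ∫ x in S, ((1 - 31 * t * ε) - t * d x) ∂μH[2] := by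
        congr 1; ext x; ring
      rw [this, integral_sub hc (hdi.const_mul t), integral_const_mul, setIntegral_const, smul_eq_mul, mul_comm]
    rw [e] at h1
    change _ ≤ m at h1
    have h2 : t * (-(31 * ε * m)) ≤ t * ∫ x in S, d x ∂μH[2] := by linarith
    exact le_of_mul_le_mul_left h2 ht0
  · intro p hp
    obtain ⟨π, ι, hF⟩ := exists_frame (n p) (G.hn_unit p hp)
    obtain ⟨r1, hr1, hflat⟩ := G.flat hp (mul_pos ht0 hε)
    obtain ⟨r2, hr2, hdp⟩ := Metric.continuousOn_iff.1 hdc p hp ε hε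
    refine ⟨min t (min r1 r2), by positivity, fun A hAm hA => ?_⟩
    have hAt : ∀ x ∈ A, ‖x - p‖ < t ∧ ‖x - p‖ < r1 ∧ ‖x - p‖ < r2 ∧ x ∈ S := by
      intro x hx
      obtain ⟨h1, h2⟩ := hA hx
      rw [mem_ball_iff_norm, lt_min_iff, lt_min_iff] at h1
      exact ⟨h1.1, h1.2.1, h1.2.2, h2⟩
    have hloc := local_measure hF (G.hn_unit p hp) (fderiv ℝ X p) K t ε (hA0 p) ht0 htK.le hε
      (by linarith) htK2.le (htr p hp) A (fun x => α x t)
      (fun x hx y hy => hexp p x y (hAt x hx).1 (hAt y hy).1)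
      (fun x hx y hy => hflat x (hAt x hx).2.2.2 y (hAt y hy).2.2.2 (hAt x hx).2.1 (hAt y hy).2.1)
    refine le_trans ?_ hloc
    rw [← setLIntegral_const]
    refine setLIntegral_mono' hAm fun x hx => ENNReal.ofReal_le_ofReal ?_
    have h1 := hdp x (hAt x hx).2.2.2 (by rw [dist_eq_norm]; exact (hAt x hx).2.2.1)
    rw [Real.dist_eq, abs_lt] at h1
    change _ ≤ 1 - t * d p - 30 * t * ε
    nlinarith [h1.1]

lemma tangent_neg {S : Set E3} {p v : E3} (h : IsTangentAt S p v) : IsTangentAt S p (-v) := by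
  obtain ⟨γ, h1, h2, h3⟩ := h
  refine ⟨fun t => γ (-t), fun t => h1 _, by simpa using h2, ?_⟩
  have h3' : HasDerivAt γ v (-0) := by simpa using h3
  have := h3'.scomp (0:ℝ) (hasDerivAt_neg (0:ℝ))
  simpa [Function.comp_def] using this

lemma one_compact {S Ωm Ωp : Set E3} {n : E3 → E3} (G : Geo S Ωm Ωp n) {X : E3 → E3}
    (hC : ContDiff ℝ 1 X) (hcs : HasCompactSupport X) (htan : ∀ p ∈ S, IsTangentAt S p (X p))
    (htr : ∀ p ∈ S, ∑ i, fderiv ℝ X p (e3 i) i = 0) :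
    ∫ p in S, ⟪fderiv ℝ X p (n p), n p⟫ ∂μH[2] = 0 := by
  apply le_antisymm _ (one_sided G hC hcs htan htr)
  have hf : ∀ p, fderiv ℝ (fun x => - X x) p = - fderiv ℝ X p := fun p => fderiv_fun_neg
  have := one_sided G (X := fun x => - X x) hC.neg hcs.neg (fun p hp => tangent_neg (htan p hp))
    (fun p hp => by simpa [hf] using htr p hp)
  simp only [hf, ContinuousLinearMap.neg_apply, inner_neg_left, integral_neg] at this
  linarith

lemma exists_cutoff {S W : Set E3} (hS : IsCompact S) (hW : IsOpen W) (hSW : S ⊆ W) :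
    ∃ χ : E3 → ℝ, ContDiff ℝ 1 χ ∧ HasCompactSupport χ ∧ tsupport χ ⊆ W ∧ ∀ p ∈ S, ∀ᶠ x in 𝓝 p, χ x = 1 := by
  obtain ⟨K2, hK2, hS2, h2W⟩ := exists_compact_between hS hW hSW
  obtain ⟨K1, hK1, hS1, h12⟩ := exists_compact_between hS isOpen_interior hS2
  obtain ⟨f, hf0, hf1, _⟩ := exists_contMDiffMap_zero_one_of_isClosed (n := 1) (modelWithCornersSelf ℝ E3)
    (s := (interior K2)ᶜ) (t := K1) isOpen_interior.isClosed_compl hK1.isClosed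
    (disjoint_left.2 fun x hx hx1 => hx (h12 hx1))
  have hsupp : Function.support f ⊆ K2 := by
    intro x hx
    by_contra h
    exact hx (hf0 (fun h' => h (interior_subset h')))
  refine ⟨f, f.contMDiff.contDiff, HasCompactSupport.of_support_subset_isCompact hK2 hsupp,
    (closure_minimal hsupp hK2.isClosed).trans h2W, fun p hp => ?_⟩
  filter_upwards [isOpen_interior.mem_nhds (hS1 hp)] with x hx
  exact hf1 (interior_subset hx)

lemma one_field {S Ωm Ωp : Set E3} {n : E3 → E3} (G : Geo S Ωm Ωp n) {v : E3 → E3} {W Ω : Set E3}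
    (hW : IsOpen W) (hSW : Ω ∪ S ⊆ W) (hv : ContDiffOn ℝ 1 v W) (hcl : S ⊆ closure Ω)
    (hdiv : ∀ p ∈ Ω, div3 v p = 0) (htan : ∀ p ∈ S, IsTangentAt S p (v p)) :
    ContinuousOn (fderiv ℝ v) S ∧ ∫ p in S, ⟪fderiv ℝ v p (n p), n p⟫ ∂μH[2] = 0 := by
  have hSW' : S ⊆ W := subset_union_right.trans hSW
  have hDW : ContinuousOn (fderiv ℝ v) W := hv.continuousOn_fderiv_of_isOpen hW (by norm_num)
  refine ⟨hDW.mono hSW', ?_⟩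
  have htr : ∀ p ∈ S, ∑ i, fderiv ℝ v p (e3 i) i = 0 := by
    intro p hp
    have hc : ContinuousAt (fun p => ∑ i, fderiv ℝ v p (e3 i) i) p := by
      have h1 : ContinuousAt (fderiv ℝ v) p := hDW.continuousAt (hW.mem_nhds (hSW' hp))
      refine tendsto_finsetSum _ fun i _ => ?_
      have h2 : ContinuousAt (fun p => fderiv ℝ v p (e3 i)) p := h1.clm_apply continuousAt_const
      exact ((EuclideanSpace.proj (𝕜 := ℝ) i).continuous.continuousAt).comp h2
    haveI : (𝓝[Ω] p).NeBot := mem_closure_iff_nhdsWithin_neBot.1 (hcl hp)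
    have h1 : Tendsto (fun p => ∑ i, fderiv ℝ v p (e3 i) i) (𝓝[Ω] p) (𝓝 0) := by
      refine tendsto_const_nhds.congr' ?_
      filter_upwards [self_mem_nhdsWithin] with x hx
      exact (hdiv x hx).symm
    exact tendsto_nhds_unique (hc.tendsto.mono_left nhdsWithin_le_nhds) h1
  obtain ⟨χ, hχC, hχs, hχW, hχ1⟩ := exists_cutoff G.hcpt hW hSW'
  have hXv : ∀ p ∈ S, (fun x => χ x • v x) =ᶠ[𝓝 p] v := by
    intro p hp
    filter_upwards [hχ1 p hp] with x hx
    simp [hx]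
  have hfd : ∀ p ∈ S, fderiv ℝ (fun x => χ x • v x) p = fderiv ℝ v p := fun p hp => (hXv p hp).fderiv_eq
  have hC : ContDiff ℝ 1 (fun x => χ x • v x) := by
    rw [contDiff_iff_contDiffAt]
    intro x
    by_cases hx : x ∈ W
    · exact hχC.contDiffAt.smul (hv.contDiffAt (hW.mem_nhds hx))
    · have : (fun x => χ x • v x) =ᶠ[𝓝 x] fun _ => 0 := by
        have h1 : x ∉ tsupport χ := fun h => hx (hχW h)
        filter_upwards [notMem_tsupport_iff_eventuallyEq.1 h1] with y hy
        simp [hy]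
      exact contDiffAt_const.congr_of_eventuallyEq this
  have hcs : HasCompactSupport (fun x => χ x • v x) := hχs.smul_right
  have h := one_compact G hC hcs (fun p hp => by
      have := (hXv p hp).eq_of_nhds
      rw [this]; exact htan p hp)
    (fun p hp => by rw [hfd p hp]; exact htr p hp)
  rw [← h]
  refine setIntegral_congr_fun G.hcpt.measurableSet fun p hp => ?_
  simp only [hfd p hp]

lemma final_aux
    (S Ωm Ωp : Set E3) (vm vp : E3 → E3) (n : E3 → E3) (G : Geo S Ωm Ωp n) (hne : S.Nonempty)
    (hvm : ∃ W, IsOpen W ∧ Ωm ∪ S ⊆ W ∧ ContDiffOn ℝ 1 vm W)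
    (hvp : ∃ W, IsOpen W ∧ Ωp ∪ S ⊆ W ∧ ContDiffOn ℝ 1 vp W)
    (hdivm : ∀ p ∈ Ωm, div3 vm p = 0)
    (hdivp : ∀ p ∈ Ωp, div3 vp p = 0)
    (htm : ∀ p ∈ S, IsTangentAt S p (vm p))
    (htp : ∀ p ∈ S, IsTangentAt S p (vp p)) :
    (∫ p in S, ⟪(fderiv ℝ vp p + fderiv ℝ vm p) (n p), n p⟫ ∂μH[2]) = 0 ∧
      ¬ (∀ p ∈ S, ⟪(fderiv ℝ vp p + fderiv ℝ vm p) (n p), n p⟫ < 0) := by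
  obtain ⟨Wm, hWm, hSm, hCm⟩ := hvm
  obtain ⟨Wp, hWp, hSp, hCp⟩ := hvp
  have lim : ∀ p : E3, ∀ w : E3, Tendsto (fun t : ℝ => p + t • w) (𝓝[>] 0) (𝓝 p) := by
    intro p w
    have : Continuous (fun t : ℝ => p + t • w) := by fun_prop
    have h := this.tendsto 0
    simp only [zero_smul, add_zero] at h
    exact h.mono_left nhdsWithin_le_nhds
  have hclm : S ⊆ closure Ωm := by
    rw [← G.henc.fr]; exact frontier_subset_closure
  have hclp : S ⊆ closure Ωp := by
    intro p hp
    obtain ⟨ε, hε, h⟩ := G.hn_out p hp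
    refine mem_closure_of_tendsto (lim p (n p)) ?_
    filter_upwards [Ioo_mem_nhdsGT hε] with t ht
    exact (h t ht.1 ht.2).1
  obtain ⟨cm, im⟩ := one_field G hWm hSm hCm hclm hdivm htm
  obtain ⟨cp, ip⟩ := one_field G hWp hSp hCp hclp hdivp htp
  have hI : ∫ p in S, ⟪(fderiv ℝ vp p + fderiv ℝ vm p) (n p), n p⟫ ∂μH[2] = 0 := by
    simp only [ContinuousLinearMap.add_apply, inner_add_left]
    rw [integral_add (G.d_int cp) (G.d_int cm), im, ip, add_zero]
  refine ⟨hI, fun hneg => ?_⟩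
  have hintg := G.d_int (B := fun p => fderiv ℝ vp p + fderiv ℝ vm p) (cp.add cm)
  have hpos : 0 < ∫ p in S, - ⟪(fderiv ℝ vp p + fderiv ℝ vm p) (n p), n p⟫ ∂μH[2] := by
    refine (setIntegral_pos_iff_support_of_nonneg_ae ?_ hintg.neg).2 ?_
    rotate_left
    · refine (G.measure_pos hne).trans_le (measure_mono fun p hp => ⟨?_, hp⟩)
      exact (neg_pos.2 (hneg p hp)).ne'
    · exact (ae_restrict_iff' G.hcpt.measurableSet).2 (Eventually.of_forall fun p hp =>
        (neg_pos.2 (hneg p hp)).le)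
  rw [integral_neg, hI] at hpos
  simp at hpos

/-- Let `S ⊂ ℝ³` be a C¹ compact closed embedded surface with exterior
unit normal `n`, bounding the region `Ωm` with exterior `Ωp`, and let `vp, vm` be C¹
vector fields, defined up to `S` on the exterior and interior respectively, divergence-free
and tangent to `S`. Then `∫_S ⟨D(vp + vm)·n, n⟩ dμH² = 0`; in particular the stability
inequality `⟨D(vp + vm)·n, n⟩ < 0` cannot hold at every point of `S`. -/
theorem statement1
    (S Ωm Ωp : Set E3) (vm vp : E3 → E3) (n : E3 → E3)
    (hS : IsSurface 1 S) (hcpt : IsCompact S) (hne : S.Nonempty)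
    (henc : EnclosedBy S Ωm Ωp)
    -- `n` is the exterior unit normal
    (hn_unit : ∀ p ∈ S, ‖n p‖ = 1)
    (hn_orth : ∀ p ∈ S, ∀ v, IsTangentAt S p v → ⟪n p, v⟫ = 0)
    (hn_cont : ContinuousOn n S)
    (hn_out : ∀ p ∈ S, ∃ ε > (0:ℝ), ∀ t : ℝ, 0 < t → t < ε →
      p + t • n p ∈ Ωp ∧ p - t • n p ∈ Ωm)
    -- the fields are C¹ up to `S` on their respective sides
    (hvm : ∃ W, IsOpen W ∧ Ωm ∪ S ⊆ W ∧ ContDiffOn ℝ 1 vm W)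
    (hvp : ∃ W, IsOpen W ∧ Ωp ∪ S ⊆ W ∧ ContDiffOn ℝ 1 vp W)
    -- divergence-free
    (hdivm : ∀ p ∈ Ωm, div3 vm p = 0)
    (hdivp : ∀ p ∈ Ωp, div3 vp p = 0)
    -- tangent to `S`
    (htm : ∀ p ∈ S, IsTangentAt S p (vm p))
    (htp : ∀ p ∈ S, IsTangentAt S p (vp p)) :
    (∫ p in S, ⟪(fderiv ℝ vp p + fderiv ℝ vm p) (n p), n p⟫ ∂μH[2]) = 0 ∧
      ¬ (∀ p ∈ S, ⟪(fderiv ℝ vp p + fderiv ℝ vm p) (n p), n p⟫ < 0) := by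
  exact final_aux S Ωm Ωp vm vp n ⟨hS, hcpt, henc, hn_unit, hn_orth, hn_cont, hn_out⟩ hne hvm hvp
    hdivm hdivp htm htp
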